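/- Let G be a graph on vertices {1,…,t} with edge set E, and let U ∈ R^{t×n} have nonnegative entries with each row summing to 1, with u_i the i-th row of U. Then any element X ∈ SDD^G_+(U) := U^T (SDD^G_+) U can be written as X = Σ_{i=1}^t λ_i u_i u_i^T + Σ_{{i,j}∈E} γ_{ij} w_{ij} w_{ij}^T, where w_{ij} ∈ [u_i, u_j] and λ_i ≥ 0, γ_{ij} ≥ 0 for all i and all {i,j} ∈ E. -/

import Mathlib

open Matrix Set

noncomputable section

/-- The embedding `ι_{ij} : S² → Sⁿ` placing a 2×2 symmetric matrix into
rows/columns `i, j` with zeros elsewhere. -/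
def iota {n : ℕ} (i j : Fin n) (S : Matrix (Fin 2) (Fin 2) ℝ) :
    Matrix (Fin n) (Fin n) ℝ :=
  Matrix.of fun r s =>
    (if r = i ∧ s = i then S 0 0 else 0) +
    (if r = i ∧ s = j then S 0 1 else 0) +
    (if r = j ∧ s = i then S 1 0 else 0) +
    (if r = j ∧ s = j then S 1 1 else 0)

/-- The cone `SDDⁿ = Σ_{i<j} ι_{ij}(S²₊)` of scaled diagonally dominant matrices. -/
def SDD (n : ℕ) : Set (Matrix (Fin n) (Fin n) ℝ) :=
  {X | ∃ S : Fin n → Fin n → Matrix (Fin 2) (Fin 2) ℝ,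
    (∀ i j : Fin n, (S i j).PosSemidef) ∧
    X = ∑ i : Fin n, ∑ j : Fin n, if i < j then iota i j (S i j) else 0}

/-- `Nⁿ`: symmetric entrywise nonnegative matrices. -/
def NonnegMat (n : ℕ) : Set (Matrix (Fin n) (Fin n) ℝ) :=
  {X | X.IsSymm ∧ ∀ i j, 0 ≤ X i j}

/-- Dual cone within the space of symmetric matrices, w.r.t. the trace inner product. -/
def dualCone {n : ℕ} (C : Set (Matrix (Fin n) (Fin n) ℝ)) :
    Set (Matrix (Fin n) (Fin n) ℝ) :=
  {Y | Y.IsSymm ∧ ∀ X ∈ C, 0 ≤ (X * Y).trace}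

open scoped Classical in
/-- `SDD^G = Σ_{{i,j}∈E} ι_{ij}(S²₊)` (equal to `{0}` if `E = ∅`). -/
def SDDG {t : ℕ} (G : SimpleGraph (Fin t)) : Set (Matrix (Fin t) (Fin t) ℝ) :=
  {X | ∃ S : Fin t → Fin t → Matrix (Fin 2) (Fin 2) ℝ,
    (∀ i j : Fin t, (S i j).PosSemidef) ∧
    X = ∑ i : Fin t, ∑ j : Fin t, if i < j ∧ G.Adj i j then iota i j (S i j) else 0}

/-- `SDD^G₊ = SDD^G ∩ Nᵗ`. -/
def SDDGplus {t : ℕ} (G : SimpleGraph (Fin t)) : Set (Matrix (Fin t) (Fin t) ℝ) :=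
  SDDG G ∩ NonnegMat t

/-- `SDD^G₊(U) = Uᵀ (SDD^G₊) U`. -/
def SDDGplusU {t n : ℕ} (G : SimpleGraph (Fin t)) (U : Matrix (Fin t) (Fin n) ℝ) :
    Set (Matrix (Fin n) (Fin n) ℝ) :=
  {X | ∃ Y ∈ SDDGplus G, X = Uᵀ * Y * U}

/-- `seg(G,U) = ∪_{{i,j}∈E} [uᵢ, uⱼ]`. -/
def seg {t n : ℕ} (G : SimpleGraph (Fin t)) (U : Matrix (Fin t) (Fin n) ℝ) :
    Set (Fin n → ℝ) :=
  {v | ∃ i j : Fin t, G.Adj i j ∧ v ∈ segment ℝ (U i) (U j)}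

/-!
The entry of `Y ∈ SDD^G₊` at an edge `i < j` is the off-diagonal entry of the block `S i j`, so each
block may be taken positive semidefinite *and* entrywise nonnegative. One step of Gaussian
elimination on such a block gives, when `a > 0` (and `a = 0` forces `b = 0`),
`!![a, b; b, c] = a⁻¹ • (a, b)(a, b)ᵀ + (c - b² / a) • e₂e₂ᵀ`,
and `b ≥ 0` makes `(a, b)` a positive multiple of a point of the simplex. Conjugating by the rows
`uᵢ, uⱼ` of `U` turns `e₂` into `uⱼ` and the point of the simplex into a point of `[uᵢ, uⱼ]`.
-/

lemma transpose_mul_vecMulVec_mul {ι κ R : Type*} [Fintype ι] [CommSemiring R]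
    (U : Matrix ι κ R) (x y : ι → R) :
    Uᵀ * vecMulVec x y * U = vecMulVec (x ᵥ* U) (y ᵥ* U) := by
  rw [mul_vecMulVec, vecMulVec_mul, mulVec_transpose]

lemma iota_eq_transpose_mul_mul {n : ℕ} (i j : Fin n) (S : Matrix (Fin 2) (Fin 2) ℝ) :
    iota i j S = ((1 : Matrix (Fin n) (Fin n) ℝ).submatrix ![i, j] id)ᵀ * S *
      (1 : Matrix (Fin n) (Fin n) ℝ).submatrix ![i, j] id := by
  ext r s
  simp only [iota, of_apply, mul_apply, transpose_apply, submatrix_apply, id_eq, one_apply,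
    Fin.sum_univ_two, cons_val_zero, cons_val_one]
  grind

lemma transpose_mul_iota_mul {t : ℕ} {κ : Type*} (U : Matrix (Fin t) κ ℝ) (i j : Fin t)
    (S : Matrix (Fin 2) (Fin 2) ℝ) :
    Uᵀ * iota i j S * U = (U.submatrix ![i, j] id)ᵀ * S * U.submatrix ![i, j] id := by
  have hrows : (1 : Matrix (Fin t) (Fin t) ℝ).submatrix ![i, j] id * U =
      U.submatrix ![i, j] id :=
    one_submatrix_mul ![i, j] (Equiv.refl (Fin t)) U
  rw [iota_eq_transpose_mul_mul, ← hrows, transpose_mul]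
  simp only [Matrix.mul_assoc]

lemma vecMul_mem_segment {κ R : Type*} [Semiring R] [PartialOrder R] {p : Fin 2 → R}
    (hp : p ∈ stdSimplex R (Fin 2)) (V : Matrix (Fin 2) κ R) :
    p ᵥ* V ∈ segment R (V 0) (V 1) := by
  refine ⟨p 0, p 1, hp.1 0, hp.1 1, by simpa [Fin.sum_univ_two] using hp.2, ?_⟩
  ext k
  simp [vecMul, dotProduct, Fin.sum_univ_two]

lemma exists_stdSimplex_decomposition_of_posSemidef {S : Matrix (Fin 2) (Fin 2) ℝ}
    (hS : S.PosSemidef) (hS₀₁ : 0 ≤ S 0 1) :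
    ∃ m g : ℝ, ∃ p ∈ stdSimplex ℝ (Fin 2), 0 ≤ m ∧ 0 ≤ g ∧
      S = m • vecMulVec (Pi.single 1 1) (Pi.single 1 1) + g • vecMulVec p p := by
  have ha : 0 ≤ S 0 0 := hS.diag_nonneg
  have hc : 0 ≤ S 1 1 := hS.diag_nonneg
  have hsymm : S 1 0 = S 0 1 := by simpa using hS.isHermitian.apply 0 1
  have hdet : 0 ≤ S 0 0 * S 1 1 - S 0 1 * S 0 1 := by
    simpa only [det_fin_two, hsymm] using hS.det_nonneg
  rw [eta_fin_two S, hsymm]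
  generalize S 0 0 = a, S 0 1 = b, S 1 1 = c at *
  rcases ha.eq_or_lt with rfl | ha
  · obtain rfl : b = 0 := by nlinarith
    refine ⟨c, 0, Pi.single 0 1, single_mem_stdSimplex ℝ 0, hc, le_rfl, ?_⟩
    ext r s
    fin_cases r <;> fin_cases s <;> simp [vecMulVec_apply]
  · have : 0 < a + b := by positivity
    refine ⟨(a * c - b * b) / a, (a + b) ^ 2 / a, ![a / (a + b), b / (a + b)],
      ⟨fun k => ?_, ?_⟩, by positivity, by positivity, ?_⟩
    · fin_cases k <;> simp only [Fin.zero_eta, Fin.mk_one, cons_val_zero, cons_val_one] <;>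
        positivity
    · simp only [Fin.sum_univ_two, cons_val_zero, cons_val_one]
      field_simp
    · ext r s
      fin_cases r <;> fin_cases s <;> simp [vecMulVec_apply] <;> field

lemma exists_segment_decomposition_of_posSemidef {t : ℕ} {κ : Type*} (U : Matrix (Fin t) κ ℝ)
    (i j : Fin t) {S : Matrix (Fin 2) (Fin 2) ℝ} (hS : S.PosSemidef) (hS₀₁ : 0 ≤ S 0 1) :
    ∃ m g : ℝ, ∃ w ∈ segment ℝ (U i) (U j), 0 ≤ m ∧ 0 ≤ g ∧
      Uᵀ * iota i j S * U = m • vecMulVec (U j) (U j) + g • vecMulVec w w := by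
  obtain ⟨m, g, p, hp, hm, hg, hS_eq⟩ := exists_stdSimplex_decomposition_of_posSemidef hS hS₀₁
  set V : Matrix (Fin 2) κ ℝ := U.submatrix ![i, j] id
  refine ⟨m, g, p ᵥ* V, vecMul_mem_segment hp V, hm, hg, ?_⟩
  have hV : Pi.single 1 1 ᵥ* V = U j := single_one_vecMul 1 V
  rw [transpose_mul_iota_mul, hS_eq, Matrix.mul_add, Matrix.add_mul, Matrix.mul_smul,
    Matrix.mul_smul, Matrix.smul_mul, Matrix.smul_mul, transpose_mul_vecMulVec_mul,
    transpose_mul_vecMulVec_mul, hV]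

lemma iota_apply_of_lt {n : ℕ} {a b i j : Fin n} (hab : a < b) (hij : i < j)
    (S : Matrix (Fin 2) (Fin 2) ℝ) :
    iota a b S i j = if i = a ∧ j = b then S 0 1 else 0 := by
  simp only [iota, of_apply]
  grind

lemma sum_iota_apply_of_adj {t : ℕ} (G : SimpleGraph (Fin t)) [DecidableRel G.Adj]
    (S : Fin t → Fin t → Matrix (Fin 2) (Fin 2) ℝ) {i j : Fin t} (hij : i < j)
    (hadj : G.Adj i j) :
    (∑ a, ∑ b, if a < b ∧ G.Adj a b then iota a b (S a b) else 0) i j = S i j 0 1 := by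
  have happly (a b : Fin t) : (if a < b ∧ G.Adj a b then iota a b (S a b) else 0) i j =
      if i = a then if j = b then S i j 0 1 else 0 else 0 := by
    split_ifs with hab <;> grind [iota_apply_of_lt, Matrix.zero_apply]
  simp [Matrix.sum_apply, happly]

open scoped Classical in
lemma exists_nonneg_blocks_of_mem_SDDGplus {t : ℕ} {G : SimpleGraph (Fin t)}
    {Y : Matrix (Fin t) (Fin t) ℝ} (hY : Y ∈ SDDGplus G) :
    ∃ S : Fin t → Fin t → Matrix (Fin 2) (Fin 2) ℝ,
      (∀ i j, (S i j).PosSemidef) ∧ (∀ i j, 0 ≤ S i j 0 1) ∧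
      Y = ∑ i, ∑ j, if i < j ∧ G.Adj i j then iota i j (S i j) else 0 := by
  obtain ⟨⟨S, hS, rfl⟩, -, hnonneg⟩ := hY
  refine ⟨fun i j => if i < j ∧ G.Adj i j then S i j else 0, fun i j => ?_, fun i j => ?_, ?_⟩
  · dsimp only
    split_ifs
    exacts [hS i j, PosSemidef.zero]
  · dsimp only
    split_ifs with hedge
    · simpa only [sum_iota_apply_of_adj G S hedge.1 hedge.2] using hnonneg i j
    · exact le_rfl
  · refine Finset.sum_congr rfl fun i _ => Finset.sum_congr rfl fun j _ => ?_
    split_ifs with hedge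
    · simp only [if_pos hedge]
    · rfl

open scoped Classical in
theorem SDDGplusU_decomposition_general {t : ℕ} {κ : Type*} (G : SimpleGraph (Fin t))
    (U : Matrix (Fin t) κ ℝ) {Y : Matrix (Fin t) (Fin t) ℝ} (hY : Y ∈ SDDGplus G) :
    ∃ (lam : Fin t → ℝ) (gam : Fin t → Fin t → ℝ) (w : Fin t → Fin t → (κ → ℝ)),
      (∀ i, 0 ≤ lam i) ∧ (∀ i j, 0 ≤ gam i j) ∧
      (∀ i j, w i j ∈ segment ℝ (U i) (U j)) ∧
      Uᵀ * Y * U = (∑ i, lam i • vecMulVec (U i) (U i)) +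
        ∑ i, ∑ j, if i < j ∧ G.Adj i j then gam i j • vecMulVec (w i j) (w i j) else 0 := by
  obtain ⟨S, hS, hS₀₁, rfl⟩ := exists_nonneg_blocks_of_mem_SDDGplus hY
  choose m g w hw hm hg hblock using fun i j =>
    exists_segment_decomposition_of_posSemidef U i j (hS i j) (hS₀₁ i j)
  have hconj (i j : Fin t) : Uᵀ * (if i < j ∧ G.Adj i j then iota i j (S i j) else 0) * U =
      (if i < j ∧ G.Adj i j then m i j else 0) • vecMulVec (U j) (U j) +
        if i < j ∧ G.Adj i j then g i j • vecMulVec (w i j) (w i j) else 0 := by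
    split_ifs
    · exact hblock i j
    · simp
  refine ⟨fun j => ∑ i, if i < j ∧ G.Adj i j then m i j else 0, g, w,
    fun j => Finset.sum_nonneg fun i _ => ?_, hg, hw, ?_⟩
  · split_ifs
    exacts [hm i j, le_rfl]
  · simp only [Matrix.mul_sum, Matrix.sum_mul, hconj, Finset.sum_add_distrib, Finset.sum_smul]
    rw [Finset.sum_comm]

open scoped Classical in
/-- Any `X ∈ SDD^G₊(U)` can be written as
`X = Σᵢ λᵢ uᵢuᵢᵀ + Σ_{{i,j}∈E} γᵢⱼ wᵢⱼwᵢⱼᵀ` with `wᵢⱼ ∈ [uᵢ,uⱼ]`, `λᵢ, γᵢⱼ ≥ 0`. -/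
theorem SDDGplusU_decomposition {t n : ℕ} (G : SimpleGraph (Fin t))
    (U : Matrix (Fin t) (Fin n) ℝ)
    (hU : ∀ i j, 0 ≤ U i j) (hrow : ∀ i, ∑ j, U i j = 1)
    (X : Matrix (Fin n) (Fin n) ℝ) (hX : X ∈ SDDGplusU G U) :
    ∃ (lam : Fin t → ℝ) (gam : Fin t → Fin t → ℝ) (w : Fin t → Fin t → (Fin n → ℝ)),
      (∀ i, 0 ≤ lam i) ∧ (∀ i j, 0 ≤ gam i j) ∧
      (∀ i j : Fin t, i < j → G.Adj i j → w i j ∈ segment ℝ (U i) (U j)) ∧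
      X = (∑ i : Fin t, lam i • vecMulVec (U i) (U i)) +
          ∑ i : Fin t, ∑ j : Fin t,
            if i < j ∧ G.Adj i j then gam i j • vecMulVec (w i j) (w i j) else 0 := by
  obtain ⟨Y, hY, rfl⟩ := hX
  obtain ⟨lam, gam, w, hlam, hgam, hw, hsum⟩ := SDDGplusU_decomposition_general G U hY
  exact ⟨lam, gam, w, hlam, hgam, fun i j _ _ => hw i j, hsum⟩

end
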